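/- arXiv:1304.4702 — 5 statements merged into one kernel-verified Lean document; each statement's English description precedes it below -/
import Mathlib

section
/- Let f : ℝ → ℝ be C^∞ on a neighborhood of a point α with f(α) = 0 and f′(α) ≠ 0, and set c₂ = f″(α)/(2 f′(α)), c₃ = f‴(α)/(6 f′(α)). Define the Newton iterate y(x) = x − f(x)/f′(x). Then, as x → α, f(y(x)) = f′(α)·[c₂(x−α)² + 2(−c₂² + c₃)(x−α)³ + O((x−α)⁴)]. -/
open Filter Topology Asymptotics

/-- The Newton iterate `y(x) = x − f(x)/f′(x)`. -/
noncomputable def newtonStep (f : ℝ → ℝ) (x : ℝ) : ℝ := x - f x / deriv f x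

theorem taylor_bigO_aux (g : ℝ → ℝ) (α : ℝ) (n : ℕ) (hg : ContDiffAt ℝ ((n + 1 : ℕ) : ℕ∞) g α) :
    (fun x => g x - ∑ k ∈ Finset.range (n + 1), iteratedDeriv k g α / k.factorial * (x - α) ^ k)
      =O[𝓝 α] fun x => (x - α) ^ (n + 1) := by
  obtain ⟨u, hu, hgu⟩ := hg.contDiffOn (m := ((n + 1 : ℕ) : ℕ∞)) le_rfl (by simp)
  obtain ⟨ε, hε, hball⟩ := Metric.mem_nhds_iff.1 hu
  have hα : α ∈ Metric.ball α ε := Metric.mem_ball_self hε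
  have h := taylor_isLittleO (n := n + 1) (convex_ball α ε) hα (hgu.mono hball)
  rw [Metric.isOpen_ball.nhdsWithin_eq hα] at h
  have h2 : (fun x => iteratedDeriv (n + 1) g α / (n + 1).factorial * (x - α) ^ (n + 1))
      =O[𝓝 α] fun x => (x - α) ^ (n + 1) := isBigO_const_mul_self _ _ _
  refine (h.isBigO.add h2).congr_left fun x => ?_
  rw [taylor_within_apply, Finset.sum_range_succ _ (n + 1)]
  simp only [iteratedDerivWithin_of_isOpen Metric.isOpen_ball hα, smul_eq_mul]
  have : ∀ k, ((k.factorial : ℝ))⁻¹ * (x - α) ^ k * iteratedDeriv k g α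
      = iteratedDeriv k g α / k.factorial * (x - α) ^ k := fun k => by
    rw [div_eq_mul_inv]; ring
  simp only [this]
  ring

theorem f_at_newton_iterate_expansion (f : ℝ → ℝ) (α : ℝ)
    (hf : ∃ s ∈ 𝓝 α, ContDiffOn ℝ (⊤ : ℕ∞) f s)
    (hroot : f α = 0) (hsimple : deriv f α ≠ 0)
    (c₂ c₃ : ℝ)
    (hc₂ : c₂ = iteratedDeriv 2 f α / (2 * deriv f α))
    (hc₃ : c₃ = iteratedDeriv 3 f α / (6 * deriv f α)) :
    (fun x => f (newtonStep f x) -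
        deriv f α * (c₂ * (x - α) ^ 2 + 2 * (-c₂ ^ 2 + c₃) * (x - α) ^ 3))
      =O[𝓝[≠] α] fun x => (x - α) ^ 4 := by
  refine IsBigO.mono ?_ nhdsWithin_le_nhds
  obtain ⟨s, hs, hfs⟩ := hf
  have hfa : ContDiffAt ℝ (⊤ : ℕ∞) f α := hfs.contDiffAt hs
  have hfn : ∀ n : ℕ, ContDiffAt ℝ (n : ℕ∞) f α := fun n =>
    hfa.of_le (by exact_mod_cast le_top)
  have hdn : ContDiffAt ℝ ((3 : ℕ) : ℕ∞) (deriv f) α := by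
    obtain ⟨u, hu, hfu⟩ := (hfn 4).contDiffOn (m := ((4 : ℕ) : ℕ∞)) le_rfl (by simp)
    obtain ⟨v, hvu, hv, hαv⟩ := mem_nhds_iff.1 hu
    have := (hfu.mono hvu).deriv_of_isOpen (m := ((3 : ℕ) : ℕ∞)) hv (by norm_num)
    exact this.contDiffAt (hv.mem_nhds hαv)
  have hR := taylor_bigO_aux f α 3 (hfn 4)
  have hS := taylor_bigO_aux (deriv f) α 2 hdn
  have hQ := taylor_bigO_aux f α 1 (hfn 2)
  set D := deriv f α with hD
  have e2 : iteratedDeriv 2 f α = 2 * D * c₂ := by rw [hc₂]; field_simp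
  have e3 : iteratedDeriv 3 f α = 6 * D * c₃ := by rw [hc₃]; field_simp
  simp only [Finset.sum_range_succ, Finset.sum_range_zero, ← iteratedDeriv_succ', zero_add,
    Nat.reduceAdd, e2, e3, iteratedDeriv_zero, iteratedDeriv_one, hroot, ← hD, Nat.factorial] at hR hS hQ
  set R : ℝ → ℝ := fun x => f x - D * ((x - α) + c₂ * (x - α) ^ 2 + c₃ * (x - α) ^ 3) with hRd
  set S : ℝ → ℝ := fun x => deriv f x - D * (1 + 2 * c₂ * (x - α) + 3 * c₃ * (x - α) ^ 2) with hSd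
  have hR' : R =O[𝓝 α] fun x => (x - α) ^ 4 := by
    refine hR.congr_left fun x => ?_
    simp only [hRd]; push_cast; ring
  have hS' : S =O[𝓝 α] fun x => (x - α) ^ 3 := by
    refine hS.congr_left fun x => ?_
    simp only [hSd]; push_cast; ring
  have hQ' : (fun x => f x - D * (x - α)) =O[𝓝 α] fun x => (x - α) ^ 2 := by
    refine hQ.congr_left fun x => ?_
    push_cast; ring
  have hdc : ContinuousAt (deriv f) α := hdn.continuousAt
  have hne : ∀ᶠ x in 𝓝 α, deriv f x ≠ 0 := hdc.eventually_ne hsimple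
  have hinv : (fun x => (deriv f x)⁻¹) =O[𝓝 α] fun _ => (1 : ℝ) :=
    (hdc.inv₀ hsimple).isBigO_one ℝ
  have hcont : ∀ p : ℝ → ℝ, Continuous p → p =O[𝓝 α] fun _ => (1 : ℝ) := fun p hp =>
    hp.continuousAt.isBigO_one ℝ
  set M : ℝ → ℝ := fun x => c₂ * (x - α) ^ 2 + 2 * (-c₂ ^ 2 + c₃) * (x - α) ^ 3 with hM
  -- the expansion of the Newton iterate
  have hT : (fun x => newtonStep f x - α - M x) =O[𝓝 α] fun x => (x - α) ^ 4 := by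
    have h1 : (fun x => (x - α) * S x) =O[𝓝 α] fun x => (x - α) ^ 4 :=
      ((isBigO_refl (fun x => x - α) (𝓝 α)).mul hS').congr_right fun x => by ring
    have h2 : (fun x => (c₂ + 2 * (-c₂ ^ 2 + c₃) * (x - α)) * (x - α) * ((x - α) * S x))
        =O[𝓝 α] fun x => (x - α) ^ 4 :=
      ((hcont (fun x => (c₂ + 2 * (-c₂ ^ 2 + c₃) * (x - α)) * (x - α)) (by fun_prop)).mul
        h1).congr_right fun x => by ring
    have h3 : (fun x => D * (3 * c₂ * c₃ + 4 * c₂ * (-c₂ ^ 2 + c₃)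
        + 6 * c₃ * (-c₂ ^ 2 + c₃) * (x - α)) * (x - α) ^ 4)
        =O[𝓝 α] fun x => (x - α) ^ 4 :=
      ((hcont (fun x => D * (3 * c₂ * c₃ + 4 * c₂ * (-c₂ ^ 2 + c₃)
        + 6 * c₃ * (-c₂ ^ 2 + c₃) * (x - α))) (by fun_prop)).mul
        (isBigO_refl (fun x => (x - α) ^ 4) (𝓝 α))).congr_right fun x => by ring
    have h4 := (hinv.mul (((h1.sub hR').sub h2).sub h3)).congr_right
      (g₂ := fun x => (x - α) ^ 4) fun x => by ring
    refine h4.congr' ?_ EventuallyEq.rfl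
    filter_upwards [hne] with x hx
    simp only [hRd, hSd, hM, newtonStep]
    field_simp
    ring
  have hM2 : M =O[𝓝 α] fun x => (x - α) ^ 2 :=
    ((hcont (fun x => c₂ + 2 * (-c₂ ^ 2 + c₃) * (x - α)) (by fun_prop)).mul
      (isBigO_refl (fun x => (x - α) ^ 2) (𝓝 α))).congr (fun x => by simp only [hM]; ring)
        fun x => by ring
  have h42 : (fun x => (x - α) ^ 4) =O[𝓝 α] fun x => (x - α) ^ 2 :=
    ((hcont (fun x => (x - α) ^ 2) (by fun_prop)).mul
      (isBigO_refl (fun x => (x - α) ^ 2) (𝓝 α))).congr (fun x => by ring) fun x => by ring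
  have hy2 : (fun x => newtonStep f x - α) =O[𝓝 α] fun x => (x - α) ^ 2 :=
    ((hT.trans h42).add hM2).congr_left fun x => by ring
  have hyt : Tendsto (newtonStep f) (𝓝 α) (𝓝 α) := by
    have h0 : Tendsto (fun x : ℝ => (x - α) ^ 2) (𝓝 α) (𝓝 0) := by
      have : Continuous (fun x : ℝ => (x - α) ^ 2) := by fun_prop
      simpa using this.tendsto α
    exact tendsto_sub_nhds_zero_iff.1 (hy2.trans_tendsto h0)
  have hF : (fun x => f (newtonStep f x) - D * (newtonStep f x - α))
      =O[𝓝 α] fun x => (x - α) ^ 4 :=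
    ((hQ'.comp_tendsto hyt).trans (hy2.pow 2)).congr_right fun x => by ring
  exact (hF.add (hT.const_mul_left D)).congr_left fun x => by simp only [hM]; ring
end

section
/- Let f : ℝ → ℝ be C^∞ on a neighborhood of a point α with f(α) = 0 and f′(α) ≠ 0, and set c₂ = f″(α)/(2 f′(α)), c₃ = f‴(α)/(6 f′(α)), c₄ = f⁗(α)/(24 f′(α)). Define y(x) = x − f(x)/f′(x) and the second step z(x) = y(x) − ((2f(x) − f(y(x)))/(2f(x) − 5f(y(x))))·(f(y(x))/f′(x)). Then, as x → α, z(x) − α = −c₂c₃(x−α)⁴ + O((x−α)⁵); in particular this two-step scheme (Kung's family with β = −1/2) has local order of convergence four. -/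
open Filter Topology Asymptotics

/-- The second step of Kung's fourth-order family with `β = −1/2`:
`z(x) = y − ((2f(x) − f(y))/(2f(x) − 5f(y)))·(f(y)/f′(x))` where `y = newtonStep f x`. -/
noncomputable def kungStep (f : ℝ → ℝ) (x : ℝ) : ℝ :=
  newtonStep f x -
    ((2 * f x - f (newtonStep f x)) / (2 * f x - 5 * f (newtonStep f x))) *
      (f (newtonStep f x) / deriv f x)

namespace KungAux

/-- A real function is bounded along a filter. -/
def Bd (l : Filter ℝ) (φ : ℝ → ℝ) : Prop := φ =O[l] (fun _ => (1 : ℝ))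

theorem Bd.const {l : Filter ℝ} (c : ℝ) : Bd l (fun _ => c) := isBigO_const_const _ one_ne_zero _

theorem Bd.add {l : Filter ℝ} {a b : ℝ → ℝ} (ha : Bd l a) (hb : Bd l b) :
    Bd l (fun x => a x + b x) := IsBigO.add ha hb

theorem Bd.sub {l : Filter ℝ} {a b : ℝ → ℝ} (ha : Bd l a) (hb : Bd l b) :
    Bd l (fun x => a x - b x) := IsBigO.sub ha hb

theorem Bd.mul {l : Filter ℝ} {a b : ℝ → ℝ} (ha : Bd l a) (hb : Bd l b) :
    Bd l (fun x => a x * b x) := by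
  have h := IsBigO.mul ha hb
  simpa [Bd] using h

theorem Bd.of_tendsto {l : Filter ℝ} {a : ℝ → ℝ} {c : ℝ} (h : Tendsto a l (𝓝 c)) : Bd l a :=
  h.isBigO_one ℝ

/-- `small * bounded` tends to zero. -/
theorem Bd.tendsto_mul {l : Filter ℝ} {a b : ℝ → ℝ} (ha : Tendsto a l (𝓝 0)) (hb : Bd l b) :
    Tendsto (fun x => a x * b x) l (𝓝 0) := by
  have h1 : a =o[l] (fun _ => (1 : ℝ)) := (isLittleO_one_iff ℝ).2 ha
  have h := h1.mul_isBigO hb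
  simp only [mul_one] at h
  exact (isLittleO_one_iff ℝ).1 h

/-- Taylor expansion with bounded remainder factor. -/
theorem taylor_bd {F : ℝ → ℝ} {α : ℝ} (n : ℕ) (hF : ContDiffAt ℝ (⊤ : ℕ∞) F α) :
    ∃ r : ℝ → ℝ, Bd (𝓝 α) r ∧ ∀ᶠ x in 𝓝 α, F x =
      (∑ k ∈ Finset.range n, ((Nat.factorial k : ℝ)⁻¹ * (x - α) ^ k) * iteratedDeriv k F α)
        + r x * (x - α) ^ n := by
  have hFn : ContDiffAt ℝ (n : ℕ) F α := hF.of_le (by exact_mod_cast le_top)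
  obtain ⟨u, hu, hFu⟩ := hFn.contDiffOn (m := (n : ℕ)) le_rfl (by simp)
  obtain ⟨ε, hε, hb⟩ := Metric.mem_nhds_iff.1 (show u ∈ 𝓝 α by simpa using hu)
  have hT := taylor_isLittleO (convex_ball α ε) (Metric.mem_ball_self hε) (hFu.mono hb)
  rw [nhdsWithin_eq_nhds.2 (Metric.ball_mem_nhds α hε)] at hT
  obtain ⟨φ, hφ, hE⟩ := isBigO_iff_exists_eq_mul.1 hT.isBigO
  refine ⟨fun x => φ x + (Nat.factorial n : ℝ)⁻¹ * iteratedDeriv n F α,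
    Bd.add ((isBigO_one_iff ℝ).2 hφ) (Bd.const _), ?_⟩
  filter_upwards [hE] with x hx
  simp only [taylor_within_apply, Pi.mul_apply, smul_eq_mul] at hx
  rw [Finset.sum_congr rfl (fun k hk => by
    rw [iteratedDerivWithin_eq_iteratedDeriv Metric.isOpen_ball.uniqueDiffOn
      (hF.of_le (by exact_mod_cast le_top)) (Metric.mem_ball_self hε)])] at hx
  rw [Finset.sum_range_succ] at hx
  linear_combination hx

/-- The key cancellation. -/
theorem key_alg (e a b c h q u V1 P P1 P2 Q Q1 Q2 U U1 U2 D D1 V M M1 : ℝ)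
    (hP2 : P2 = 3 * c + e * h) (hP1 : P1 = 2 * b + e * P2) (hP : P = a + e * P1)
    (hQ2 : Q2 = (3 * c - 7 * a * b + 5 * a ^ 3) + e * q) (hQ1 : Q1 = (2 * b - 2 * a ^ 2) + e * Q2)
    (hQ : Q = a + e * Q1)
    (hU2 : U2 = b + e * u) (hU1 : U1 = a + e * U2) (hU : U = 1 + e * U1)
    (hD1 : D1 = 2 * U1 - 5 * Q) (hD : D = 2 * U - 5 * e * Q) (hV : V = 1 + e * V1)
    (hM1 : M1 = (7 * a * b - 5 * a ^ 3) + e * (h - q)) (hM : M = 2 * a ^ 2 + e * M1) :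
    P * D - Q * (2 * U - e * Q) + a * b * e ^ 2 * V * D =
      e ^ 3 * (2 * (h - q) + 2 * (U2 * M + a * M1) + a * (Q2 - 5 * P2)
        + (Q2 * (Q - 5 * P) + (2 * b - 2 * a ^ 2) * (Q1 - 5 * P1)) + a * b * (V1 * D + D1)) := by
  subst hM hM1 hV hD hD1 hU hU1 hU2 hQ hQ1 hQ2 hP hP1 hP2
  ring

end KungAux

open KungAux

theorem kung_step_fourth_order (f : ℝ → ℝ) (α : ℝ)
    (hf : ∃ s ∈ 𝓝 α, ContDiffOn ℝ (⊤ : ℕ∞) f s)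
    (hroot : f α = 0) (hsimple : deriv f α ≠ 0)
    (c₂ c₃ c₄ : ℝ)
    (hc₂ : c₂ = iteratedDeriv 2 f α / (2 * deriv f α))
    (hc₃ : c₃ = iteratedDeriv 3 f α / (6 * deriv f α))
    (hc₄ : c₄ = iteratedDeriv 4 f α / (24 * deriv f α)) :
    (fun x => kungStep f x - α - (-(c₂ * c₃) * (x - α) ^ 4))
      =O[𝓝[≠] α] fun x => (x - α) ^ 5 := by
  obtain ⟨S, hS, hfS⟩ := hf
  have hfα : ContDiffAt ℝ (⊤ : ℕ∞) f α := hfS.contDiffAt hS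
  have hf'α : ContDiffAt ℝ (⊤ : ℕ∞) (deriv f) α := by
    have := hfα.derivWithin (m := (⊤ : ℕ∞)) (by exact_mod_cast le_top)
    simpa using this
  set d := deriv f α with hd
  have i2 : iteratedDeriv 2 f α = 2 * d * c₂ := by rw [hc₂]; field_simp
  have i3 : iteratedDeriv 3 f α = 6 * d * c₃ := by rw [hc₃]; field_simp
  have i4 : iteratedDeriv 4 f α = 24 * d * c₄ := by rw [hc₄]; field_simp
  have j1 : iteratedDeriv 1 (deriv f) α = 2 * d * c₂ := by rw [← i2, ← iteratedDeriv_succ']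
  have j2 : iteratedDeriv 2 (deriv f) α = 6 * d * c₃ := by rw [← i3, ← iteratedDeriv_succ']
  have j3 : iteratedDeriv 3 (deriv f) α = 24 * d * c₄ := by rw [← i4, ← iteratedDeriv_succ']
  have i1 : iteratedDeriv 1 f α = d := by rw [iteratedDeriv_one]
  obtain ⟨r0, hr0, hfr⟩ := taylor_bd 5 hfα
  obtain ⟨s0, hs0, hfs⟩ := taylor_bd 4 hf'α
  obtain ⟨t0, ht0, hft⟩ := taylor_bd 3 hfα
  simp only [Finset.sum_range_succ, Finset.sum_range_zero, i1, i2, i3, i4, j1, j2, j3,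
    iteratedDeriv_zero, hroot, Nat.factorial, ← hd] at hfr hfs hft
  set l := 𝓝[≠] α with hl
  have hle : l ≤ 𝓝 α := nhdsWithin_le_nhds
  set E : ℝ → ℝ := fun x => x - α with hE
  have tE : Tendsto E l (𝓝 0) := by
    have : Tendsto E (𝓝 α) (𝓝 (α - α)) := (continuous_id.sub continuous_const).tendsto α
    rw [sub_self] at this
    exact this.mono_left hle
  have bE : Bd l E := Bd.of_tendsto tE
  have bc : ∀ c : ℝ, Bd l (fun _ => c) := fun c => Bd.const c
  obtain ⟨r, hr⟩ : ∃ r : ℝ → ℝ, r = fun x => d⁻¹ * r0 x := ⟨_, rfl⟩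
  obtain ⟨s, hs⟩ : ∃ s : ℝ → ℝ, s = fun x => d⁻¹ * s0 x := ⟨_, rfl⟩
  have br : Bd l r := by rw [hr]; exact (bc _).mul (hr0.mono hle)
  have bs : Bd l s := by rw [hs]; exact (bc _).mul (hs0.mono hle)
  obtain ⟨h, hh⟩ : ∃ h : ℝ → ℝ, h = fun x => s x - r x := ⟨_, rfl⟩
  have bh : Bd l h := by rw [hh]; exact bs.sub br
  -- numerator pieces
  obtain ⟨P2, hP2⟩ : ∃ P2 : ℝ → ℝ, P2 = fun x => 3 * c₄ + E x * h x := ⟨_, rfl⟩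
  have bP2 : Bd l P2 := by rw [hP2]; exact (bc _).add (bE.mul bh)
  obtain ⟨P1, hP1⟩ : ∃ P1 : ℝ → ℝ, P1 = fun x => 2 * c₃ + E x * P2 x := ⟨_, rfl⟩
  have bP1 : Bd l P1 := by rw [hP1]; exact (bc _).add (bE.mul bP2)
  obtain ⟨P, hP⟩ : ∃ P : ℝ → ℝ, P = fun x => c₂ + E x * P1 x := ⟨_, rfl⟩
  have bP : Bd l P := by rw [hP]; exact (bc _).add (bE.mul bP1)
  obtain ⟨u, hu⟩ : ∃ u : ℝ → ℝ, u = fun x => c₄ + E x * r x := ⟨_, rfl⟩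
  have bu : Bd l u := by rw [hu]; exact (bc _).add (bE.mul br)
  obtain ⟨U2, hU2⟩ : ∃ U2 : ℝ → ℝ, U2 = fun x => c₃ + E x * u x := ⟨_, rfl⟩
  have bU2 : Bd l U2 := by rw [hU2]; exact (bc _).add (bE.mul bu)
  obtain ⟨U1, hU1⟩ : ∃ U1 : ℝ → ℝ, U1 = fun x => c₂ + E x * U2 x := ⟨_, rfl⟩
  have bU1 : Bd l U1 := by rw [hU1]; exact (bc _).add (bE.mul bU2)
  obtain ⟨U, hU⟩ : ∃ U : ℝ → ℝ, U = fun x => 1 + E x * U1 x := ⟨_, rfl⟩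
  have bU : Bd l U := by rw [hU]; exact (bc _).add (bE.mul bU1)
  obtain ⟨v3, hv3⟩ : ∃ v3 : ℝ → ℝ, v3 = fun x => 4 * c₄ + E x * s x := ⟨_, rfl⟩
  have bv3 : Bd l v3 := by rw [hv3]; exact (bc _).add (bE.mul bs)
  obtain ⟨V2, hV2⟩ : ∃ V2 : ℝ → ℝ, V2 = fun x => 3 * c₃ + E x * v3 x := ⟨_, rfl⟩
  have bV2 : Bd l V2 := by rw [hV2]; exact (bc _).add (bE.mul bv3)
  obtain ⟨V1, hV1⟩ : ∃ V1 : ℝ → ℝ, V1 = fun x => 2 * c₂ + E x * V2 x := ⟨_, rfl⟩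
  have bV1 : Bd l V1 := by rw [hV1]; exact (bc _).add (bE.mul bV2)
  obtain ⟨V, hV⟩ : ∃ V : ℝ → ℝ, V = fun x => 1 + E x * V1 x := ⟨_, rfl⟩
  have bV : Bd l V := by rw [hV]; exact (bc _).add (bE.mul bV1)
  have tV : Tendsto V l (𝓝 1) := by
    rw [hV]; simpa using (tendsto_const_nhds (x := (1 : ℝ))).add (Bd.tendsto_mul tE bV1)
  have neV : ∀ᶠ x in l, V x ≠ 0 := tV.eventually_ne one_ne_zero
  obtain ⟨g, hg⟩ : ∃ g : ℝ → ℝ, g = fun x => (V x)⁻¹ := ⟨_, rfl⟩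
  have bg : Bd l g := by rw [hg]; exact Bd.of_tendsto (tV.inv₀ one_ne_zero)
  obtain ⟨p1, hp1⟩ : ∃ p1 : ℝ, p1 = 2 * c₃ - 2 * c₂ ^ 2 := ⟨_, rfl⟩
  obtain ⟨p2, hp2⟩ : ∃ p2 : ℝ, p2 = 3 * c₄ - 7 * c₂ * c₃ + 4 * c₂ ^ 3 := ⟨_, rfl⟩
  obtain ⟨p3, hp3⟩ : ∃ p3 : ℝ → ℝ, p3 = fun x => (h x - (c₂ * v3 x + p1 * V2 x + p2 * V1 x)) * g x :=
    ⟨_, rfl⟩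
  have bp3 : Bd l p3 := by
    rw [hp3]
    exact (bh.sub ((((bc _).mul bv3).add ((bc _).mul bV2)).add ((bc _).mul bV1))).mul bg
  obtain ⟨pPr, hpPr⟩ : ∃ pPr : ℝ → ℝ, pPr = fun x => p1 + E x * (p2 + E x * p3 x) := ⟨_, rfl⟩
  have bpPr : Bd l pPr := by rw [hpPr]; exact (bc _).add (bE.mul ((bc _).add (bE.mul bp3)))
  obtain ⟨p, hp⟩ : ∃ p : ℝ → ℝ, p = fun x => c₂ + E x * pPr x := ⟨_, rfl⟩
  have bp : Bd l p := by rw [hp]; exact (bc _).add (bE.mul bpPr)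
  have hpV : ∀ᶠ x in l, p x * V x = P x := by
    filter_upwards [neV] with x hx
    have hgV : g x * V x = 1 := by rw [hg]; exact inv_mul_cancel₀ hx
    have e3 : p3 x * V x = h x - (c₂ * v3 x + p1 * V2 x + p2 * V1 x) := by
      rw [hp3]; simp only; rw [mul_assoc, hgV, mul_one]
    have : p x * V x = (c₂ + E x * p1 + E x ^ 2 * p2) * V x + E x ^ 3 * (p3 x * V x) := by
      rw [hp, hpPr]; ring
    rw [this, e3]
    simp only [hP, hP1, hP2, hV, hV1, hV2]
    rw [hp1, hp2]
    ring
  -- the Newton step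
  have hne : ∀ᶠ x in l, E x ≠ 0 := by
    filter_upwards [self_mem_nhdsWithin] with x hx
    exact sub_ne_zero.2 hx
  have hfx : ∀ᶠ x in l, f x = d * (E x * U x) := by
    filter_upwards [hle hfr] with x hx
    rw [hx]
    simp only [hU, hU1, hU2, hu, hr, hE]
    push_cast
    field_simp
    ring
  have hf'x : ∀ᶠ x in l, deriv f x = d * V x := by
    filter_upwards [hle hfs] with x hx
    rw [hx]
    simp only [hV, hV1, hV2, hv3, hs, hE]
    push_cast
    field_simp
    ring
  have hy : ∀ᶠ x in l, newtonStep f x = α + E x * (E x * p x) := by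
    filter_upwards [hfx, hf'x, neV, hpV] with x h1 h2 h3 h4
    have : E x * P x = V x - U x := by
      simp only [hP, hP1, hP2, hV, hV1, hV2, hv3, hU, hU1, hU2, hu, hh]
      ring
    rw [newtonStep, h1, h2, mul_div_mul_left _ _ hsimple]
    have hx : x = α + E x := by simp [hE]
    have h5 : E x * U x / V x = E x - E x * (E x * p x) := by
      rw [div_eq_iff h3]
      linear_combination E x * this + E x * E x * h4
    rw [h5]; linear_combination hx
  have ty : Tendsto (newtonStep f) l (𝓝 α) := by
    have : Tendsto (fun x => α + E x * (E x * p x)) l (𝓝 (α + 0)) :=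
      tendsto_const_nhds.add (Bd.tendsto_mul tE (bE.mul bp))
    rw [add_zero] at this
    exact this.congr' (hy.mono fun x hx => hx.symm)
  obtain ⟨t, ht⟩ : ∃ t : ℝ → ℝ, t = fun x => d⁻¹ * t0 (newtonStep f x) := ⟨_, rfl⟩
  have bt : Bd l t := by
    rw [ht]; exact (bc _).mul (IsBigO.comp_tendsto ht0 ty)
  obtain ⟨q, hq⟩ : ∃ q : ℝ → ℝ, q = fun x => p3 x + c₂ * (pPr x * (2 * c₂ + E x * pPr x))
    + t x * (E x * (p x * (p x * p x))) := ⟨_, rfl⟩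
  have bq : Bd l q := by
    rw [hq]
    exact (bp3.add ((bc _).mul (bpPr.mul ((bc _).add (bE.mul bpPr))))).add
      (bt.mul (bE.mul (bp.mul (bp.mul bp))))
  obtain ⟨Q2, hQ2⟩ : ∃ Q2 : ℝ → ℝ, Q2 = fun x => (3 * c₄ - 7 * c₂ * c₃ + 5 * c₂ ^ 3) + E x * q x :=
    ⟨_, rfl⟩
  have bQ2 : Bd l Q2 := by rw [hQ2]; exact (bc _).add (bE.mul bq)
  obtain ⟨Q1, hQ1⟩ : ∃ Q1 : ℝ → ℝ, Q1 = fun x => (2 * c₃ - 2 * c₂ ^ 2) + E x * Q2 x := ⟨_, rfl⟩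
  have bQ1 : Bd l Q1 := by rw [hQ1]; exact (bc _).add (bE.mul bQ2)
  obtain ⟨Q, hQ⟩ : ∃ Q : ℝ → ℝ, Q = fun x => c₂ + E x * Q1 x := ⟨_, rfl⟩
  have bQ : Bd l Q := by rw [hQ]; exact (bc _).add (bE.mul bQ1)
  have hfy : ∀ᶠ x in l, f (newtonStep f x) = d * (E x ^ 2 * Q x) := by
    filter_upwards [ty.eventually hft, hy] with x h1 h2
    rw [h1]
    have ht' : t0 (newtonStep f x) = d * t x := by
      rw [ht]; field_simp
    rw [ht', h2]
    have e1 : Q x = p x + c₂ * E x ^ 2 * p x ^ 2 + t x * E x ^ 4 * p x ^ 3 := by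
      have a1 : Q x = c₂ + E x * (p1 + E x * (p2 + c₂ ^ 3 + E x * q x)) := by
        simp only [hQ, hQ1, hQ2]; rw [hp1, hp2]; ring
      have a2 : p x = c₂ + E x * pPr x := by rw [hp]
      have a3 : pPr x = p1 + E x * (p2 + E x * p3 x) := by rw [hpPr]
      have a4 : q x = p3 x + c₂ * (pPr x * (2 * c₂ + E x * pPr x))
        + t x * (E x * (p x * (p x * p x))) := by rw [hq]
      have a5 : p x ^ 2 = c₂ ^ 2 + E x * (pPr x * (2 * c₂ + E x * pPr x)) := by rw [a2]; ring
      rw [a1, a4, a5]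
      linear_combination (-1) * a2 - E x * a3
    rw [e1]
    push_cast
    ring
  obtain ⟨D1, hD1⟩ : ∃ D1 : ℝ → ℝ, D1 = fun x => 2 * U1 x - 5 * Q x := ⟨_, rfl⟩
  have bD1 : Bd l D1 := by rw [hD1]; exact ((bc _).mul bU1).sub ((bc _).mul bQ)
  obtain ⟨D, hD⟩ : ∃ D : ℝ → ℝ, D = fun x => 2 + E x * D1 x := ⟨_, rfl⟩
  have bD : Bd l D := by rw [hD]; exact (bc _).add (bE.mul bD1)
  have tD : Tendsto D l (𝓝 2) := by
    rw [hD]; simpa using (tendsto_const_nhds (x := (2 : ℝ))).add (Bd.tendsto_mul tE bD1)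
  have neD : ∀ᶠ x in l, D x ≠ 0 := tD.eventually_ne two_ne_zero
  have hDU : ∀ x, D x = 2 * U x - 5 * E x * Q x := by
    intro x; simp only [hD, hD1, hU]; ring
  obtain ⟨M1, hM1⟩ : ∃ M1 : ℝ → ℝ, M1 = fun x =>
    (7 * c₂ * c₃ - 5 * c₂ ^ 3) + E x * (h x - q x) := ⟨_, rfl⟩
  have bM1 : Bd l M1 := by rw [hM1]; exact (bc _).add (bE.mul (bh.sub bq))
  obtain ⟨M, hM⟩ : ∃ M : ℝ → ℝ, M = fun x => 2 * c₂ ^ 2 + E x * M1 x := ⟨_, rfl⟩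
  have bM : Bd l M := by rw [hM]; exact (bc _).add (bE.mul bM1)
  obtain ⟨W, hW⟩ : ∃ W : ℝ → ℝ, W = fun x =>
    2 * (h x - q x) + 2 * (U2 x * M x + c₂ * M1 x) + c₂ * (Q2 x - 5 * P2 x)
        + (Q2 x * (Q x - 5 * P x) + (2 * c₃ - 2 * c₂ ^ 2) * (Q1 x - 5 * P1 x))
        + c₂ * c₃ * (V1 x * D x + D1 x) := ⟨_, rfl⟩
  have bW : Bd l W := by
    rw [hW]
    exact (((((bc _).mul (bh.sub bq)).add ((bc _).mul ((bU2.mul bM).add ((bc _).mul bM1)))).add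
      ((bc _).mul (bQ2.sub ((bc _).mul bP2)))).add
      ((bQ2.mul (bQ.sub ((bc _).mul bP))).add ((bc _).mul (bQ1.sub ((bc _).mul bP1))))).add
      ((bc _).mul ((bV1.mul bD).add bD1))
  have hkey : ∀ x, P x * D x - Q x * (2 * U x - E x * Q x) + c₂ * c₃ * E x ^ 2 * V x * D x =
      E x ^ 3 * W x := by
    intro x
    rw [hW]
    exact key_alg (E x) c₂ c₃ c₄ (h x) (q x) (u x) (V1 x) (P x) (P1 x) (P2 x) (Q x) (Q1 x) (Q2 x)
      (U x) (U1 x) (U2 x) (D x) (D1 x) (V x) (M x) (M1 x)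
      (by rw [hP2]) (by rw [hP1]) (by rw [hP]) (by rw [hQ2]) (by rw [hQ1]) (by rw [hQ])
      (by rw [hU2]) (by rw [hU1]) (by rw [hU]) (by rw [hD1]) (hDU x) (by rw [hV])
      (by rw [hM1]) (by rw [hM])
  have bDi : Bd l (fun x => (D x)⁻¹) := Bd.of_tendsto (tD.inv₀ two_ne_zero)
  have bfin : Bd l (fun x => W x * (g x * (D x)⁻¹)) := bW.mul (bg.mul bDi)
  have hfin : (fun x => kungStep f x - α - (-(c₂ * c₃) * (x - α) ^ 4)) =ᶠ[l]
      fun x => (W x * (g x * (D x)⁻¹)) * (x - α) ^ 5 := by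
    filter_upwards [hfx, hf'x, hy, hfy, hpV, neV, neD, hne] with x h1 h2 h3 h4 h5 h6 h7 h8
    have hgx : g x = (V x)⁻¹ := by rw [hg]
    have hk := hkey x
    have hden : 2 * (d * (E x * U x)) - 5 * (d * (E x ^ 2 * Q x)) = (d * E x) * D x := by
      rw [hDU]; ring
    have hnum : 2 * (d * (E x * U x)) - (d * (E x ^ 2 * Q x))
        = (d * E x) * (2 * U x - E x * Q x) := by ring
    have hfr1 : (2 * (d * (E x * U x)) - (d * (E x ^ 2 * Q x))) /
        (2 * (d * (E x * U x)) - 5 * (d * (E x ^ 2 * Q x))) = (2 * U x - E x * Q x) / D x := by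
      rw [hden, hnum, mul_div_mul_left _ _ (mul_ne_zero hsimple h8)]
    have hpx : p x = P x / V x := by rw [eq_div_iff h6, h5]
    rw [kungStep, h4, h1, h2, hfr1, mul_div_mul_left _ _ hsimple, h3, hgx, hpx]
    change _ - α - (-(c₂ * c₃) * (E x) ^ 4) = _ * (E x) ^ 5
    field_simp
    linear_combination E x ^ 2 * hk
  refine IsBigO.congr' ?_ hfin.symm EventuallyEq.rfl
  simpa using IsBigO.mul bfin (isBigO_refl (fun x => (x - α) ^ 5) l)
end

section
/- Let f : ℝ → ℝ be C^∞ on a neighborhood of a point α with f(α) = 0 and f′(α) ≠ 0, and set c₂ = f″(α)/(2 f′(α)), c₃ = f‴(α)/(6 f′(α)). Define y(x) = x − f(x)/f′(x) and z(x) = y(x) − ((2f(x) − f(y(x)))/(2f(x) − 5f(y(x))))·(f(y(x))/f′(x)). Then, as x → α, f(z(x)) = f′(α)·[−c₂c₃(x−α)⁴ + O((x−α)⁵)]. -/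
open Filter Topology Asymptotics

/-- Taylor expansion with big-O remainder. -/
lemma taylor_bigO (g : ℝ → ℝ) (α : ℝ) (n : ℕ) (hg : ContDiffAt ℝ (n : ℕ) g α) :
    (fun x => g x - ∑ k ∈ Finset.range n, iteratedDeriv k g α / (k.factorial : ℝ) * (x - α) ^ k)
      =O[𝓝 α] fun x => (x - α) ^ n := by
  obtain ⟨u, hu, hgu⟩ := hg.contDiffOn (m := (n : ℕ)) le_rfl (by simp)
  obtain ⟨ε, hε, hball⟩ := Metric.mem_nhds_iff.1 hu
  have hs : Convex ℝ (Metric.ball α ε) := convex_ball α ε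
  have hmem : α ∈ Metric.ball α ε := Metric.mem_ball_self hε
  have h := (taylor_isLittleO hs hmem (hgu.mono hball)).isBigO
  rw [Metric.isOpen_ball.nhdsWithin_eq hmem] at h
  have h2 : (fun x => iteratedDeriv n g α / (n.factorial : ℝ) * (x - α) ^ n)
      =O[𝓝 α] fun x => (x - α) ^ n := (isBigO_refl _ _).const_mul_left _
  refine (h.add h2).congr_left fun x => ?_
  rw [taylor_within_apply, Finset.sum_range_succ]
  have : ∀ k, iteratedDerivWithin k g (Metric.ball α ε) α = iteratedDeriv k g α := fun k =>
    iteratedDerivWithin_of_isOpen Metric.isOpen_ball hmem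
  simp only [this, smul_eq_mul]
  have e : ∀ k, ((k.factorial : ℝ))⁻¹ * (x - α) ^ k * iteratedDeriv k g α
    = iteratedDeriv k g α / (k.factorial : ℝ) * (x - α) ^ k := fun k => by ring
  simp only [e]
  ring

/-- Boundedness along a filter. -/
def Bd (l : Filter ℝ) (g : ℝ → ℝ) : Prop := g =O[l] fun _ => (1 : ℝ)

namespace Bd
variable {l : Filter ℝ} {g h : ℝ → ℝ}

lemma const (c : ℝ) : Bd l fun _ => c := isBigO_const_const c one_ne_zero l
lemma add (hg : Bd l g) (hh : Bd l h) : Bd l fun x => g x + h x := IsBigO.add hg hh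
lemma sub (hg : Bd l g) (hh : Bd l h) : Bd l fun x => g x - h x := IsBigO.sub hg hh
lemma neg (hg : Bd l g) : Bd l fun x => - g x := IsBigO.neg_left hg
lemma mul (hg : Bd l g) (hh : Bd l h) : Bd l fun x => g x * h x := by
  have := IsBigO.mul hg hh
  simpa [Bd] using this
lemma pow (hg : Bd l g) (n : ℕ) : Bd l fun x => g x ^ n := by
  have := IsBigO.pow hg n
  simpa [Bd] using this
lemma of_tendsto {a : ℝ} (hg : Tendsto g l (𝓝 a)) : Bd l g := hg.isBigO_one ℝ
lemma tendsto_mul (hg : Tendsto g l (𝓝 0)) (hh : Bd l h) :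
    Tendsto (fun x => g x * h x) l (𝓝 0) := by
  have h1 : g =o[l] fun _ => (1 : ℝ) := (isLittleO_one_iff ℝ).2 hg
  have h2 := h1.mul_isBigO hh
  simpa [isLittleO_one_iff] using h2
lemma of_quot {g : ℝ → ℝ} {α : ℝ} {n : ℕ} (a : ℝ)
    (hg : g =O[𝓝 α] fun x => (x - α) ^ n) : Bd (𝓝 α) fun x => g x / (a * (x - α) ^ n) := by
  have h1 : (fun x => (x - α) ^ n * (a * (x - α) ^ n)⁻¹) =O[𝓝 α] fun _ => (1 : ℝ) := by
    refine IsBigO.of_bound |a⁻¹| (Eventually.of_forall fun x => ?_)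
    by_cases hx : (x - α) ^ n = 0
    · simp [hx]
    · rw [mul_inv, mul_comm, mul_assoc, inv_mul_cancel₀ hx]; simp
  have := (hg.mul (isBigO_refl (fun x => (a * (x - α) ^ n)⁻¹) (𝓝 α))).trans h1
  simpa [Bd, div_eq_mul_inv] using this
end Bd

theorem f_at_kung_step_expansion (f : ℝ → ℝ) (α : ℝ)
    (hf : ∃ s ∈ 𝓝 α, ContDiffOn ℝ (⊤ : ℕ∞) f s)
    (hroot : f α = 0) (hsimple : deriv f α ≠ 0)
    (c₂ c₃ : ℝ)
    (hc₂ : c₂ = iteratedDeriv 2 f α / (2 * deriv f α))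
    (hc₃ : c₃ = iteratedDeriv 3 f α / (6 * deriv f α)) :
    (fun x => f (kungStep f x) - deriv f α * (-(c₂ * c₃) * (x - α) ^ 4))
      =O[𝓝[≠] α] fun x => (x - α) ^ 5 := by
  obtain ⟨S, hS, hfS⟩ := hf
  have hfα : ContDiffAt ℝ (⊤ : ℕ∞) f α := hfS.contDiffAt hS
  have hf4 : ContDiffAt ℝ (4 : ℕ) f α := hfα.of_le 
    (WithTop.coe_le_coe.2 (le_top : ((4 : ℕ) : ℕ∞) ≤ ⊤))
  have hd3 : ContDiffAt ℝ (3 : ℕ) (deriv f) α := by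
    exact hf4.derivWithin (by norm_num)
  have T1 := taylor_bigO f α 4 hf4
  have T2 := taylor_bigO (deriv f) α 3 hd3
  have i2 : iteratedDeriv 2 f α = 2 * c₂ * deriv f α := by rw [hc₂]; field_simp
  have i3 : iteratedDeriv 3 f α = 6 * c₃ * deriv f α := by rw [hc₃]; field_simp
  have j1 : iteratedDeriv 1 (deriv f) α = iteratedDeriv 2 f α := by
    rw [← iteratedDeriv_succ']
  have j2 : iteratedDeriv 2 (deriv f) α = iteratedDeriv 3 f α := by
    rw [← iteratedDeriv_succ']
  simp only [Finset.sum_range_succ, Finset.sum_range_zero, j1, j2, i2, i3, iteratedDeriv_zero,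
    iteratedDeriv_one, hroot, Nat.factorial] at T1 T2
  clear j1 j2 i2 i3 hc₂ hc₃
  generalize ha : deriv f α = a at *
  generalize c₂ = c at *
  generalize c₃ = d at *
  obtain ⟨r, br, hr⟩ : ∃ r : ℝ → ℝ, Bd (𝓝 α) r ∧ ∀ x, f x =
      a * ((x - α) + c * (x - α) ^ 2 + d * (x - α) ^ 3 + r x * (x - α) ^ 4) := by
    refine ⟨_, Bd.of_quot a T1, fun x => ?_⟩
    by_cases hx : x - α = 0
    · have : x = α := by linarith
      subst this; simp [hroot]
    · field_simp
      push_cast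
      ring
  obtain ⟨s, bs, hs⟩ : ∃ s : ℝ → ℝ, Bd (𝓝 α) s ∧ ∀ x, deriv f x =
      a * (1 + 2 * c * (x - α) + 3 * d * (x - α) ^ 2 + s x * (x - α) ^ 3) := by
    refine ⟨_, Bd.of_quot a T2, fun x => ?_⟩
    by_cases hx : x - α = 0
    · have : x = α := by linarith
      subst this; simp [ha]
    · field_simp
      push_cast
      ring
  clear T1 T2
  obtain ⟨e, he⟩ : ∃ e : ℝ → ℝ, ∀ x, e x = x - α := ⟨_, fun _ => rfl⟩
  have te : Tendsto e (𝓝[≠] α) (𝓝 0) := by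
    have : Tendsto (fun x => x - α) (𝓝 α) (𝓝 (α - α)) := (continuous_id.sub continuous_const).tendsto α
    rw [sub_self] at this
    rw [funext he]
    exact this.mono_left nhdsWithin_le_nhds
  have e0 : ∀ᶠ x in 𝓝[≠] α, e x ≠ 0 := by
    filter_upwards [self_mem_nhdsWithin] with x hx
    rw [he]; exact sub_ne_zero.2 hx
  have be : Bd (𝓝[≠] α) e := Bd.of_tendsto te
  have br' : Bd (𝓝[≠] α) r := br.mono nhdsWithin_le_nhds
  have bs' : Bd (𝓝[≠] α) s := bs.mono nhdsWithin_le_nhds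
  -- D
  obtain ⟨D1, hD1⟩ : ∃ D1 : ℝ → ℝ, ∀ x, D1 x = 2 * c + 3 * d * e x + s x * e x ^ 2 :=
    ⟨_, fun _ => rfl⟩
  have bD1 : Bd (𝓝[≠] α) D1 := by
    rw [funext hD1]
    repeat' first | assumption | exact Bd.const _ | apply Bd.add | apply Bd.sub | apply Bd.mul | apply Bd.pow | apply Bd.neg
  obtain ⟨D, hD⟩ : ∃ D : ℝ → ℝ, ∀ x, D x = 1 + e x * D1 x := ⟨_, fun _ => rfl⟩
  have tD : Tendsto D (𝓝[≠] α) (𝓝 1) := by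
    rw [funext hD]; simpa using (Bd.tendsto_mul te bD1).const_add 1
  have D0 : ∀ᶠ x in 𝓝[≠] α, D x ≠ 0 := tD.eventually_ne one_ne_zero
  obtain ⟨I, hI⟩ : ∃ I : ℝ → ℝ, ∀ x, I x = (D x)⁻¹ := ⟨_, fun _ => rfl⟩
  have bI : Bd (𝓝[≠] α) I := by
    rw [funext hI]; exact Bd.of_tendsto (tD.inv₀ one_ne_zero)
  -- Y
  obtain ⟨u, hu⟩ : ∃ u : ℝ → ℝ, ∀ x, u x = s x - r x := ⟨_, fun _ => rfl⟩
  have bu : Bd (𝓝[≠] α) u := by rw [funext hu]; exact bs'.sub br'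
  obtain ⟨V, hV⟩ : ∃ V : ℝ → ℝ, ∀ x, V x = c + 2 * d * e x + u x * e x ^ 2 := ⟨_, fun _ => rfl⟩
  have bV : Bd (𝓝[≠] α) V := by
    rw [funext hV]
    repeat' first | assumption | exact Bd.const _ | apply Bd.add | apply Bd.sub | apply Bd.mul | apply Bd.pow | apply Bd.neg
  obtain ⟨Y, hY⟩ : ∃ Y : ℝ → ℝ, ∀ x, Y x = V x * I x := ⟨_, fun _ => rfl⟩
  have bY : Bd (𝓝[≠] α) Y := by rw [funext hY]; exact bV.mul bI
  have hy : ∀ᶠ x in 𝓝[≠] α, newtonStep f x = α + e x * (e x * Y x) := by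
    filter_upwards [D0, e0] with x hx hx'
    have h1 : deriv f x = a * D x := by rw [hs, hD, hD1, he]; ring
    have h2 : f x = a * (e x + c * e x ^ 2 + d * e x ^ 3 + r x * e x ^ 4) := by rw [hr, he]
    have h3 : x = α + e x := by rw [he]; ring
    have h4 : newtonStep f x = α + e x - f x / deriv f x := by rw [newtonStep, ← h3]
    rw [h4, h1, h2, hY, hI, hV, hu]
    field_simp
    rw [hD, hD1]
    ring
  have ty : Tendsto (newtonStep f) (𝓝[≠] α) (𝓝 α) := by
    have := (Bd.tendsto_mul te (be.mul bY)).const_add α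
    rw [add_zero] at this
    exact this.congr' (hy.mono fun x hx => hx.symm)
  obtain ⟨q, hq⟩ : ∃ q : ℝ → ℝ, ∀ x, q x = r (newtonStep f x) := ⟨_, fun _ => rfl⟩
  have bq : Bd (𝓝[≠] α) q := by rw [funext hq]; exact br.comp_tendsto ty
  -- third-order remainder of Y
  obtain ⟨k, hk⟩ : ∃ k : ℝ → ℝ, ∀ x, k x = u x - 7 * c * d + 4 * c ^ 3 := ⟨_, fun _ => rfl⟩
  have bk : Bd (𝓝[≠] α) k := by
    rw [funext hk]
    repeat' first | assumption | exact Bd.const _ | apply Bd.add | apply Bd.sub | apply Bd.mul | apply Bd.pow | apply Bd.neg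
  obtain ⟨w, hw⟩ : ∃ w : ℝ → ℝ, ∀ x, w x = (-(c * s x) - (2 * d - 2 * c ^ 2) * (3 * d + s x * e x)
      - k x * D1 x) * I x := ⟨_, fun _ => rfl⟩
  have bw : Bd (𝓝[≠] α) w := by
    rw [funext hw]
    repeat' first | assumption | exact Bd.const _ | apply Bd.add | apply Bd.sub | apply Bd.mul | apply Bd.pow | apply Bd.neg
  have hYw : ∀ᶠ x in 𝓝[≠] α,
      Y x = c + (2 * d - 2 * c ^ 2) * e x + k x * e x ^ 2 + w x * e x ^ 3 := by
    filter_upwards [D0] with x hx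
    rw [hY, hw, hI]
    field_simp
    rw [hV, hD, hD1, hk]
    ring
  obtain ⟨t, ht⟩ : ∃ t : ℝ → ℝ, ∀ x, t x = w x
      + c * ((2 * d - 2 * c ^ 2) + k x * e x + w x * e x ^ 2) * (Y x + c)
      + d * e x * Y x ^ 3 + q x * e x ^ 3 * Y x ^ 4 := ⟨_, fun _ => rfl⟩
  have bt : Bd (𝓝[≠] α) t := by
    rw [funext ht]
    repeat' first | assumption | exact Bd.const _ | apply Bd.add | apply Bd.sub | apply Bd.mul | apply Bd.pow | apply Bd.neg
  obtain ⟨m, hm⟩ : ∃ m : ℝ → ℝ, ∀ x, m x = k x + c ^ 3 := ⟨_, fun _ => rfl⟩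
  have bm : Bd (𝓝[≠] α) m := by
    rw [funext hm]
    repeat' first | assumption | exact Bd.const _ | apply Bd.add | apply Bd.sub | apply Bd.mul | apply Bd.pow | apply Bd.neg
  obtain ⟨F, hF⟩ : ∃ F : ℝ → ℝ, ∀ x, F x = c + (2 * d - 2 * c ^ 2) * e x + m x * e x ^ 2
      + t x * e x ^ 3 := ⟨_, fun _ => rfl⟩
  have bF : Bd (𝓝[≠] α) F := by
    rw [funext hF]
    repeat' first | assumption | exact Bd.const _ | apply Bd.add | apply Bd.sub | apply Bd.mul | apply Bd.pow | apply Bd.neg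
  have hfy : ∀ᶠ x in 𝓝[≠] α, f (newtonStep f x) = a * (e x ^ 2 * F x) := by
    filter_upwards [hy, hYw] with x hx hx'
    rw [hr, ← hq, hx, hF, ht, hm]
    have h1 : w x * e x ^ 3 = Y x - (c + (2 * d - 2 * c ^ 2) * e x + k x * e x ^ 2) := by
      rw [hx']; ring
    linear_combination (-a * e x ^ 2 * (1 + c * (Y x + c) * e x ^ 2)) * h1
  -- W
  obtain ⟨W1, hW1⟩ : ∃ W1 : ℝ → ℝ, ∀ x, W1 x = 2 * (c + d * e x + r x * e x ^ 2) - 5 * F x :=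
    ⟨_, fun _ => rfl⟩
  have bW1 : Bd (𝓝[≠] α) W1 := by
    rw [funext hW1]
    repeat' first | assumption | exact Bd.const _ | apply Bd.add | apply Bd.sub | apply Bd.mul | apply Bd.pow | apply Bd.neg
  obtain ⟨W, hW⟩ : ∃ W : ℝ → ℝ, ∀ x, W x = 2 + e x * W1 x := ⟨_, fun _ => rfl⟩
  have tW : Tendsto W (𝓝[≠] α) (𝓝 2) := by
    rw [funext hW]; simpa using (Bd.tendsto_mul te bW1).const_add 2
  have W0 : ∀ᶠ x in 𝓝[≠] α, W x ≠ 0 := tW.eventually_ne two_ne_zero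
  obtain ⟨J, hJ⟩ : ∃ J : ℝ → ℝ, ∀ x, J x = (W x)⁻¹ := ⟨_, fun _ => rfl⟩
  have bJ : Bd (𝓝[≠] α) J := by
    rw [funext hJ]; exact Bd.of_tendsto (tW.inv₀ two_ne_zero)
  -- numerator remainder
  obtain ⟨F0, hF0⟩ : ∃ F0 : ℝ → ℝ, ∀ x, F0 x = c + (2 * d - 2 * c ^ 2) * e x + m x * e x ^ 2 :=
    ⟨_, fun _ => rfl⟩
  have bF0 : Bd (𝓝[≠] α) F0 := by
    rw [funext hF0]
    repeat' first | assumption | exact Bd.const _ | apply Bd.add | apply Bd.sub | apply Bd.mul | apply Bd.pow | apply Bd.neg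
  obtain ⟨G, hG⟩ : ∃ G : ℝ → ℝ, ∀ x, G x =
      (2 * (2 * d * d + u x * c) - 5 * (c * u x + 2 * d * (2 * d - 2 * c ^ 2) + m x * c)
        - 2 * (c * m x + d * (2 * d - 2 * c ^ 2)) + (2 * d - 2 * c ^ 2) ^ 2 + 2 * c * m x)
      + e x * (2 * u x * d - 5 * ((2 * d - 2 * c ^ 2) * u x + 2 * d * m x) - 2 * d * m x
        + 2 * (2 * d - 2 * c ^ 2) * m x)
      + e x ^ 2 * (m x ^ 2 - 5 * m x * u x)
      + V x * (2 * r x - 5 * e x * t x)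
      - 2 * (1 + c * e x + d * e x ^ 2) * t x - 2 * r x * F x
      + e x * t x * (F0 x + F x) := ⟨_, fun _ => rfl⟩
  have bG : Bd (𝓝[≠] α) G := by
    rw [funext hG]
    repeat' first | assumption | exact Bd.const _ | apply Bd.add | apply Bd.sub | apply Bd.mul | apply Bd.pow | apply Bd.neg
  obtain ⟨P, hP⟩ : ∃ P : ℝ → ℝ, ∀ x, P x = 1 + c * e x + d * e x ^ 2 + r x * e x ^ 3 :=
    ⟨_, fun _ => rfl⟩
  have hN : ∀ x, V x * W x - (2 * P x - e x * F x) * F x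
      = -2 * (c * d) * e x ^ 2 + e x ^ 3 * G x := by
    intro x
    rw [hG, hW, hW1, hP, hF0, hF, hV, hm, hk]
    ring
  obtain ⟨H, hH⟩ : ∃ H : ℝ → ℝ, ∀ x, H x =
      (G x + c * d * (2 * D1 x + W1 x + e x * D1 x * W1 x)) * I x * J x := ⟨_, fun _ => rfl⟩
  have bH : Bd (𝓝[≠] α) H := by
    rw [funext hH]
    repeat' first | assumption | exact Bd.const _ | apply Bd.add | apply Bd.sub | apply Bd.mul | apply Bd.pow | apply Bd.neg
  obtain ⟨Z, hZ⟩ : ∃ Z : ℝ → ℝ, ∀ x, Z x = -(c * d) + e x * H x := ⟨_, fun _ => rfl⟩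
  have bZ : Bd (𝓝[≠] α) Z := by
    rw [funext hZ]
    repeat' first | assumption | exact Bd.const _ | apply Bd.add | apply Bd.sub | apply Bd.mul | apply Bd.pow | apply Bd.neg
  have hz : ∀ᶠ x in 𝓝[≠] α, kungStep f x = α + e x * (e x ^ 3 * Z x) := by
    filter_upwards [hy, hfy, D0, W0, e0] with x h1 h2 hx hx' hex
    have h3 : deriv f x = a * D x := by rw [hs, hD, hD1, he]; ring
    have h4 : f x = a * e x * P x := by rw [hr, hP, he]; ring
    have h5 : 2 * f x - 5 * (a * (e x ^ 2 * F x)) = a * e x * W x := by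
      rw [h4, hW, hW1, hP]; ring
    have h6 : 2 * f x - (a * (e x ^ 2 * F x)) = a * e x * (2 * P x - e x * F x) := by
      rw [h4]; ring
    rw [kungStep, h2, h5, h6, h1, h3, hY, hZ, hH, hI, hJ]
    have h7 : (2 * P x - e x * F x) * F x = V x * W x
        - (-2 * (c * d) * e x ^ 2 + e x ^ 3 * G x) := by rw [← hN]; ring
    have h8 : a * e x * (2 * P x - e x * F x) / (a * e x * W x) * (a * (e x ^ 2 * F x) / (a * D x))
        = e x ^ 2 * ((2 * P x - e x * F x) * F x) / (W x * D x) := by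
      field_simp
    have h9 : D x * W x = 2 + e x * (2 * D1 x + W1 x + e x * D1 x * W1 x) := by
      rw [hD, hW]; ring
    rw [h8, h7]
    field_simp
    linear_combination (e x ^ 4 * c * d) * h9
  have tz : Tendsto (kungStep f) (𝓝[≠] α) (𝓝 α) := by
    have := (Bd.tendsto_mul te ((be.pow 3).mul bZ)).const_add α
    rw [add_zero] at this
    exact this.congr' (hz.mono fun x hx => hx.symm)
  obtain ⟨p, hp⟩ : ∃ p : ℝ → ℝ, ∀ x, p x = r (kungStep f x) := ⟨_, fun _ => rfl⟩
  have bp : Bd (𝓝[≠] α) p := by rw [funext hp]; exact br.comp_tendsto tz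
  have bR : Bd (𝓝[≠] α) fun x => a * (H x + c * e x ^ 3 * Z x ^ 2 + d * e x ^ 7 * Z x ^ 3
      + p x * e x ^ 11 * Z x ^ 4) := by
    repeat' first | assumption | exact Bd.const _ | apply Bd.add | apply Bd.sub | apply Bd.mul | apply Bd.pow | apply Bd.neg
  have fin := (isBigO_refl (fun x => (x - α) ^ 5) (𝓝[≠] α)).mul bR
  simp only [mul_one] at fin
  refine fin.congr' ?_ EventuallyEq.rfl
  filter_upwards [hz] with x hx
  rw [hr (kungStep f x), ← hp, hx, ← he x]
  have h1 : e x * H x = Z x + c * d := by rw [hZ]; ring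
  linear_combination (a * e x ^ 4) * h1
end

section
/- Let f : ℝ → ℝ be C^∞ on a neighborhood of a point α with f(α) = 0 and f′(α) ≠ 0, and set c₂ = f″(α)/(2 f′(α)), c₃ = f‴(α)/(6 f′(α)), c₄ = f⁗(α)/(24 f′(α)). Define y(x) = x − f(x)/f′(x). Then, as x → α, the divided difference f[x, y(x)] = (f(x) − f(y(x)))/(x − y(x)) satisfies f[x, y(x)] = f′(α)·[1 + c₂(x−α) + (c₂² + c₃)(x−α)² + (−2c₂³ + 3c₃c₂ + c₄)(x−α)³ + O((x−α)⁴)]. -/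
open Filter Topology Asymptotics

/-- The first-order divided difference `f[u,v] = (f(u) − f(v))/(u − v)`. -/
noncomputable def divDiff (f : ℝ → ℝ) (u v : ℝ) : ℝ := (f u - f v) / (u - v)

/-- Taylor expansion with bounded remainder coefficient. -/
lemma taylor_bdd (g : ℝ → ℝ) (α ε : ℝ) (hε : 0 < ε) (n : ℕ)
    (hg : ContDiffOn ℝ ((n + 1 : ℕ) : WithTop ℕ∞) g (Metric.ball α ε)) :
    ∃ r : ℝ → ℝ, r =O[𝓝 α] (fun _ => (1 : ℝ)) ∧
      ∀ x, g x = (∑ k ∈ Finset.range (n + 1),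
        ((k.factorial : ℝ)⁻¹ * (x - α) ^ k) * iteratedDeriv k g α) + r x * (x - α) ^ (n + 1) := by
  have hα : α ∈ Metric.ball α ε := Metric.mem_ball_self hε
  have h1 := taylor_isLittleO (convex_ball α ε) hα hg
  rw [Metric.isOpen_ball.nhdsWithin_eq hα] at h1
  set P : ℝ → ℝ := fun x => ∑ k ∈ Finset.range (n + 1),
        ((k.factorial : ℝ)⁻¹ * (x - α) ^ k) * iteratedDeriv k g α with hP
  have h2 : (fun x => g x - P x) =O[𝓝 α] fun x => (x - α) ^ (n + 1) := by
    have h3 : (fun x => (((n + 1).factorial : ℝ)⁻¹ * (x - α) ^ (n + 1)) *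
        iteratedDeriv (n + 1) g α) =O[𝓝 α] fun x => (x - α) ^ (n + 1) := by
      have := (isBigO_refl (fun x : ℝ => (x - α) ^ (n + 1)) (𝓝 α)).const_mul_left
        (((n + 1).factorial : ℝ)⁻¹ * iteratedDeriv (n + 1) g α)
      refine this.congr_left fun x => by ring
    refine (h1.isBigO.add h3).congr_left fun x => ?_
    rw [taylor_within_apply, Finset.sum_range_succ]
    have : ∀ k, iteratedDerivWithin k g (Metric.ball α ε) α = iteratedDeriv k g α :=
      fun k => iteratedDerivWithin_of_isOpen Metric.isOpen_ball hα
    simp only [this, smul_eq_mul, hP]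
    ring
  refine ⟨fun x => (g x - P x) / (x - α) ^ (n + 1), ?_, fun x => ?_⟩
  · obtain ⟨C, hC⟩ := h2.bound
    refine IsBigO.of_bound (max C 0) ?_
    filter_upwards [hC] with x hx
    rw [norm_div, norm_one, mul_one]
    refine div_le_of_le_mul₀ (norm_nonneg _) (le_max_right _ _) (hx.trans ?_)
    gcongr
    exact le_max_left _ _
  · change g x = P x + _
    by_cases hx : x = α
    · subst hx
      have : P x = g x := by simp [hP, Finset.sum_range_succ']
      simp [this]
    · have : x - α ≠ 0 := sub_ne_zero.mpr hx
      field_simp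
      ring

lemma newton_alg (c₂ c₃ c₄ e r s t u v k w q η : ℝ) (he : e ≠ 0)
    (hu : (1 + 2 * c₂ * e + 3 * c₃ * e ^ 2 + 4 * c₄ * e ^ 3 + s * e ^ 4) * u = 1)
    (hk : k = 2 * c₃ - 2 * c₂ ^ 2)
    (hw : w = (c₂ + 2 * c₃ * e + 3 * c₄ * e ^ 2 + (s - r) * e ^ 3) * u)
    (hv : (1 - e * w) * v = 1)
    (hq : q = u * ((3 * c₄ - 2 * c₂ * k - 3 * c₃ * c₂) +
      ((s - r) - 3 * c₃ * k - 4 * c₄ * c₂) * e + (- s * c₂ - 4 * c₄ * k) * e ^ 2 - s * k * e ^ 3))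
    (hη : η = e ^ 2 * w) :
    ((e + c₂ * e ^ 2 + c₃ * e ^ 3 + c₄ * e ^ 4 + r * e ^ 5) -
      (η + c₂ * η ^ 2 + c₃ * η ^ 3 + c₄ * η ^ 4 + t * η ^ 5)) / (e - η) -
      (1 + c₂ * e + (c₂ ^ 2 + c₃) * e ^ 2 + (-2 * c₂ ^ 3 + 3 * c₃ * c₂ + c₄) * e ^ 3) =
    (c₂ * q + c₃ * (k + e * q) + c₃ * w ^ 2 + c₄ * (w + e * w ^ 2 + e ^ 2 * w ^ 3) +
      (r - t * e ^ 5 * w ^ 5) * v) * e ^ 4 := by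
  have hwq : w = c₂ + k * e + e ^ 2 * q := by
    rw [hw, hq, hk]
    linear_combination (c₂ + (2 * c₃ - 2 * c₂ ^ 2) * e) * hu
  have h1 : e - η = e * (1 - e * w) := by rw [hη]; ring
  have h2 : 1 - e * w ≠ 0 := left_ne_zero_of_mul_eq_one hv
  have h3 : e - η ≠ 0 := by rw [h1]; exact mul_ne_zero he h2
  have h4 : ((e + c₂ * e ^ 2 + c₃ * e ^ 3 + c₄ * e ^ 4 + r * e ^ 5) -
      (η + c₂ * η ^ 2 + c₃ * η ^ 3 + c₄ * η ^ 4 + t * η ^ 5)) / (e - η) =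
      1 + c₂ * (e + η) + c₃ * (e ^ 2 + e * η + η ^ 2) +
      c₄ * (e ^ 3 + e ^ 2 * η + e * η ^ 2 + η ^ 3) + (r - t * e ^ 5 * w ^ 5) * v * e ^ 4 := by
    rw [div_eq_iff h3, hη]
    linear_combination (-(r - t * e ^ 5 * w ^ 5) * e ^ 5) * hv
  rw [h4, hη]
  have hk' := hk
  linear_combination (c₂ * e ^ 2 + c₃ * e ^ 3) * hwq + c₂ * e ^ 3 * hk

theorem divDiff_x_y_expansion (f : ℝ → ℝ) (α : ℝ)
    (hf : ∃ s ∈ 𝓝 α, ContDiffOn ℝ (⊤ : ℕ∞) f s)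
    (hroot : f α = 0) (hsimple : deriv f α ≠ 0)
    (c₂ c₃ c₄ : ℝ)
    (hc₂ : c₂ = iteratedDeriv 2 f α / (2 * deriv f α))
    (hc₃ : c₃ = iteratedDeriv 3 f α / (6 * deriv f α))
    (hc₄ : c₄ = iteratedDeriv 4 f α / (24 * deriv f α)) :
    (fun x => divDiff f x (newtonStep f x) -
        deriv f α * (1 + c₂ * (x - α) + (c₂ ^ 2 + c₃) * (x - α) ^ 2 +
          (-2 * c₂ ^ 3 + 3 * c₃ * c₂ + c₄) * (x - α) ^ 3))
      =O[𝓝[≠] α] fun x => (x - α) ^ 4 := by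
  obtain ⟨S, hS, hfS⟩ := hf
  obtain ⟨ε, hε, hball⟩ := Metric.mem_nhds_iff.mp hS
  have hfB : ContDiffOn ℝ (⊤ : ℕ∞) f (Metric.ball α ε) := hfS.mono hball
  have hf5 : ContDiffOn ℝ ((4 + 1 : ℕ) : WithTop ℕ∞) f (Metric.ball α ε) :=
    hfB.of_le (WithTop.coe_le_coe.mpr (le_top : (((4 + 1 : ℕ) : ℕ∞)) ≤ ⊤))
  have hd4 : ContDiffOn ℝ ((3 + 1 : ℕ) : WithTop ℕ∞) (deriv f) (Metric.ball α ε) :=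
    hfB.deriv_of_isOpen Metric.isOpen_ball (WithTop.coe_le_coe.mpr (le_top : (((3 + 1 : ℕ) : ℕ∞) + 1) ≤ ⊤))
  obtain ⟨r₀, hr₀, hfr⟩ := taylor_bdd f α ε hε 4 hf5
  obtain ⟨s₀, hs₀, hfs⟩ := taylor_bdd (deriv f) α ε hε 3 hd4
  set a := deriv f α with ha
  have e2 : iteratedDeriv 2 f α = 2 * a * c₂ := by rw [hc₂]; field_simp
  have e3 : iteratedDeriv 3 f α = 6 * a * c₃ := by rw [hc₃]; field_simp
  have e4 : iteratedDeriv 4 f α = 24 * a * c₄ := by rw [hc₄]; field_simp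
  have F : ∀ x, f x = a * ((x - α) + c₂ * (x - α) ^ 2 + c₃ * (x - α) ^ 3 + c₄ * (x - α) ^ 4 +
      (r₀ x / a) * (x - α) ^ 5) := by
    intro x
    rw [hfr x]
    simp only [Finset.sum_range_succ, Finset.sum_range_zero, e2, e3, e4, iteratedDeriv_one,
      iteratedDeriv_zero, hroot, ← ha, Nat.factorial]
    field_simp
    push_cast
    ring
  have F' : ∀ x, deriv f x = a * (1 + 2 * c₂ * (x - α) + 3 * c₃ * (x - α) ^ 2 +
      4 * c₄ * (x - α) ^ 3 + (s₀ x / a) * (x - α) ^ 4) := by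
    intro x
    rw [hfs x]
    simp only [Finset.sum_range_succ, Finset.sum_range_zero, ← iteratedDeriv_succ']
    simp only [Nat.reduceAdd, e2, e3, e4, iteratedDeriv_one, ← ha, Nat.factorial]
    field_simp
    push_cast
    ring
  -- bounded functions
  set l := 𝓝[≠] α with hl
  have hle : l ≤ 𝓝 α := nhdsWithin_le_nhds
  let B : (ℝ → ℝ) → Prop := fun g => g =O[l] (fun _ => (1 : ℝ))
  have Bc : ∀ c : ℝ, B (fun _ => c) := fun c => isBigO_const_const c one_ne_zero l
  have Badd : ∀ {g h : ℝ → ℝ}, B g → B h → B (fun x => g x + h x) := fun hg hh => hg.add hh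
  have Bsub : ∀ {g h : ℝ → ℝ}, B g → B h → B (fun x => g x - h x) := fun hg hh => hg.sub hh
  have Bneg : ∀ {g : ℝ → ℝ}, B g → B (fun x => - g x) := fun hg => hg.neg_left
  have Bmul : ∀ {g h : ℝ → ℝ}, B g → B h → B (fun x => g x * h x) := fun hg hh => by
    simpa [B] using hg.mul hh
  have Bpow : ∀ {g : ℝ → ℝ} (n : ℕ), B g → B (fun x => g x ^ n) := fun n hg => by
    simpa [B] using hg.pow n
  have Blim : ∀ {g : ℝ → ℝ} {c : ℝ}, Tendsto g l (𝓝 c) → B g := fun hg => hg.isBigO_one ℝ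
  have te : Tendsto (fun x => x - α) l (𝓝 0) := by
    have : Tendsto (fun x => x - α) (𝓝 α) (𝓝 (α - α)) := (continuous_id.sub continuous_const).tendsto α
    rw [sub_self] at this
    exact this.mono_left hle
  have Be : B (fun x => x - α) := Blim te
  have Tz : ∀ {g : ℝ → ℝ}, B g → Tendsto (fun x => (x - α) * g x) l (𝓝 0) := fun {g} hg => by
    have h1 : (fun x => x - α) =o[l] (fun _ => (1 : ℝ)) := (isLittleO_one_iff ℝ).mpr te
    have h2 := h1.mul_isBigO hg
    simp only [mul_one] at h2
    exact (isLittleO_one_iff ℝ).mp h2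
  let r : ℝ → ℝ := fun x => r₀ x / a
  let s : ℝ → ℝ := fun x => s₀ x / a
  have Br' : r =O[𝓝 α] (fun _ => (1 : ℝ)) :=
    (hr₀.const_mul_left a⁻¹).congr_left fun x => by simp only [r]; ring
  have Br : B r := Br'.mono hle
  have Bs : B s := ((hs₀.const_mul_left a⁻¹).congr_left fun x => by simp only [s]; ring).mono hle
  let D : ℝ → ℝ := fun x => 1 + 2 * c₂ * (x - α) + 3 * c₃ * (x - α) ^ 2 +
      4 * c₄ * (x - α) ^ 3 + s x * (x - α) ^ 4
  have tD : Tendsto D l (𝓝 1) := by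
    have hb : B (fun x => 2 * c₂ + 3 * c₃ * (x - α) + 4 * c₄ * (x - α) ^ 2 + s x * (x - α) ^ 3) :=
      Badd (Badd (Badd (Bc _) (Bmul (Bc _) Be)) (Bmul (Bc _) (Bpow 2 Be))) (Bmul Bs (Bpow 3 Be))
    have := (Tz hb).const_add 1
    rw [add_zero] at this
    refine this.congr fun x => ?_
    simp only [D]; ring
  let u : ℝ → ℝ := fun x => (D x)⁻¹
  have Bu : B u := Blim (tD.inv₀ one_ne_zero)
  let w : ℝ → ℝ := fun x =>
    (c₂ + 2 * c₃ * (x - α) + 3 * c₄ * (x - α) ^ 2 + (s x - r x) * (x - α) ^ 3) * u x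
  have Bw : B w := Bmul (Badd (Badd (Badd (Bc _) (Bmul (Bc _) Be)) (Bmul (Bc _) (Bpow 2 Be)))
    (Bmul (Bsub Bs Br) (Bpow 3 Be))) Bu
  have tE : Tendsto (fun x => 1 - (x - α) * w x) l (𝓝 1) := by
    simpa using (Tz Bw).const_sub 1
  let v : ℝ → ℝ := fun x => (1 - (x - α) * w x)⁻¹
  have Bv : B v := Blim (tE.inv₀ one_ne_zero)
  let k : ℝ := 2 * c₃ - 2 * c₂ ^ 2
  let q : ℝ → ℝ := fun x => u x * ((3 * c₄ - 2 * c₂ * k - 3 * c₃ * c₂) +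
      ((s x - r x) - 3 * c₃ * k - 4 * c₄ * c₂) * (x - α) +
      (- s x * c₂ - 4 * c₄ * k) * (x - α) ^ 2 - s x * k * (x - α) ^ 3)
  have Bq : B q := Bmul Bu (Bsub (Badd (Badd (Bc _) (Bmul (Bsub (Bsub (Bsub Bs Br) (Bc _)) (Bc _)) Be))
    (Bmul (Bsub (Bmul (Bneg Bs) (Bc _)) (Bc _)) (Bpow 2 Be))) (Bmul (Bmul Bs (Bc _)) (Bpow 3 Be)))
  let y : ℝ → ℝ := fun x => α + (x - α) ^ 2 * w x
  have ty : Tendsto y l (𝓝 α) := by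
    have := (Tz (Bmul Be Bw)).const_add α
    rw [add_zero] at this
    refine this.congr fun x => ?_
    simp only [y]; ring
  let t : ℝ → ℝ := fun x => r (y x)
  have Bt : B t := Br'.comp_tendsto ty
  have BG : B (fun x => a * (c₂ * q x + c₃ * (k + (x - α) * q x) + c₃ * w x ^ 2 +
      c₄ * (w x + (x - α) * w x ^ 2 + (x - α) ^ 2 * w x ^ 3) +
      (r x - t x * (x - α) ^ 5 * w x ^ 5) * v x)) :=
    Bmul (Bc _) (Badd (Badd (Badd (Badd (Bmul (Bc _) Bq) (Bmul (Bc _) (Badd (Bc _) (Bmul Be Bq))))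
      (Bmul (Bc _) (Bpow 2 Bw)))
      (Bmul (Bc _) (Badd (Badd Bw (Bmul Be (Bpow 2 Bw))) (Bmul (Bpow 2 Be) (Bpow 3 Bw)))))
      (Bmul (Bsub Br (Bmul (Bmul Bt (Bpow 5 Be)) (Bpow 5 Bw))) Bv))
  have hfin := BG.mul (isBigO_refl (fun x : ℝ => (x - α) ^ 4) l)
  simp only [one_mul] at hfin
  refine hfin.congr' ?_ EventuallyEq.rfl
  filter_upwards [tD.eventually_ne one_ne_zero, tE.eventually_ne one_ne_zero,
    (self_mem_nhdsWithin : {α}ᶜ ∈ 𝓝[≠] α)] with x hD hE hx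
  have he : x - α ≠ 0 := sub_ne_zero.mpr hx
  have hu : D x * u x = 1 := mul_inv_cancel₀ hD
  have hy : newtonStep f x = y x := by
    have h1 : deriv f x = a * D x := F' x
    rw [newtonStep, F x, h1, mul_div_mul_left _ _ hsimple, div_eq_mul_inv]
    change x - _ * u x = α + (x - α) ^ 2 * (_ * u x)
    have hu' : (1 + 2 * c₂ * (x - α) + 3 * c₃ * (x - α) ^ 2 +
      4 * c₄ * (x - α) ^ 3 + s x * (x - α) ^ 4) * u x = 1 := hu
    change x - (x - α + c₂ * (x - α) ^ 2 + c₃ * (x - α) ^ 3 + c₄ * (x - α) ^ 4 +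
      r x * (x - α) ^ 5) * u x = _
    linear_combination (-(x - α)) * hu'
  have key := newton_alg c₂ c₃ c₄ (x - α) (r x) (s x) (t x) (u x) (v x) k (w x) (q x)
    (y x - α) he hu rfl rfl (mul_inv_cancel₀ hE) rfl (by simp only [y]; ring)
  rw [hy, divDiff, F x, F (y x), mul_assoc, ← key, ← mul_sub,
    show x - y x = (x - α) - (y x - α) by ring, mul_sub a, mul_div_assoc]
end

section
/- Let f : ℝ → ℝ be C^∞ on a neighborhood of a point α with f(α) = 0 and f′(α) ≠ 0, and set c₂ = f″(α)/(2 f′(α)), c₃ = f‴(α)/(6 f′(α)), c₄ = f⁗(α)/(24 f′(α)). Define y(x) = x − f(x)/f′(x). Then, as x → α, the second-order divided difference with repeated node f[y(x), x, x] = ((f(y(x)) − f(x))/(y(x) − x) − f′(x))/(y(x) − x) satisfies f[y(x), x, x] = f′(α)·[c₂ + 2c₃(x−α) + (3c₄ + c₂c₃)(x−α)² + O((x−α)³)]. -/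
open Filter Topology Asymptotics

/-- The second-order divided difference with repeated node `v`:
`f[u,v,v] = (f[u,v] − f′(v))/(u − v)`. -/
noncomputable def divDiff2 (f : ℝ → ℝ) (u v : ℝ) : ℝ :=
  (divDiff f u v - deriv f v) / (u - v)

theorem taylorBigO_aux (f : ℝ → ℝ) (α ε : ℝ) (hε : 0 < ε) (n : ℕ)
    (hf : ContDiffOn ℝ ((n + 1 : ℕ) : WithTop ℕ∞) f (Metric.ball α ε)) :
    (fun x => f x - taylorWithinEval f n (Metric.ball α ε) α x) =O[𝓝 α]
      fun x => (x - α) ^ (n + 1) := by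
  have hmem : α ∈ Metric.ball α ε := Metric.mem_ball_self hε
  have h := (taylor_isLittleO (convex_ball α ε) hmem hf).isBigO
  rw [Metric.isOpen_ball.nhdsWithin_eq hmem] at h
  have h2 : (fun x => (((n + 1 : ℝ) * n.factorial)⁻¹ *
      iteratedDerivWithin (n + 1) f (Metric.ball α ε) α) * (x - α) ^ (n + 1)) =O[𝓝 α]
      fun x => (x - α) ^ (n + 1) := isBigO_const_mul_self _ _ _
  refine (h.add h2).congr_left fun x => ?_
  rw [taylorWithinEval_succ]
  simp only [smul_eq_mul]
  ring

theorem divDiff2_y_x_x_expansion (f : ℝ → ℝ) (α : ℝ)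
    (hf : ∃ s ∈ 𝓝 α, ContDiffOn ℝ (⊤ : ℕ∞) f s)
    (hroot : f α = 0) (hsimple : deriv f α ≠ 0)
    (c₂ c₃ c₄ : ℝ)
    (hc₂ : c₂ = iteratedDeriv 2 f α / (2 * deriv f α))
    (hc₃ : c₃ = iteratedDeriv 3 f α / (6 * deriv f α))
    (hc₄ : c₄ = iteratedDeriv 4 f α / (24 * deriv f α)) :
    (fun x => divDiff2 f (newtonStep f x) x -
        deriv f α * (c₂ + 2 * c₃ * (x - α) + (3 * c₄ + c₂ * c₃) * (x - α) ^ 2))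
      =O[𝓝[≠] α] fun x => (x - α) ^ 3 := by
  obtain ⟨s, hs, hfs⟩ := hf
  obtain ⟨ε, hε, hball⟩ := Metric.mem_nhds_iff.1 hs
  have hfb : ContDiffOn ℝ (⊤ : ℕ∞) f (Metric.ball α ε) := hfs.mono hball
  have hopen : IsOpen (Metric.ball α ε) := Metric.isOpen_ball
  have hmem : α ∈ Metric.ball α ε := Metric.mem_ball_self hε
  have hfd : ContDiffOn ℝ (⊤ : ℕ∞) (deriv f) (Metric.ball α ε) :=
    hfb.deriv_of_isOpen hopen (by simp)
  have hit : ∀ (k : ℕ) (g : ℝ → ℝ), iteratedDerivWithin k g (Metric.ball α ε) α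
      = iteratedDeriv k g α := fun k g => iteratedDerivWithin_of_isOpen hopen hmem
  set A := deriv f α with hA
  have h2 : iteratedDeriv 2 f α = 2 * A * c₂ := by rw [hc₂]; field_simp
  have h3 : iteratedDeriv 3 f α = 6 * A * c₃ := by rw [hc₃]; field_simp
  have h4 : iteratedDeriv 4 f α = 24 * A * c₄ := by rw [hc₄]; field_simp
  have g1 : iteratedDeriv 1 (deriv f) α = 2 * A * c₂ := by rw [← h2, iteratedDeriv_succ' (n := 1)]
  have g2 : iteratedDeriv 2 (deriv f) α = 6 * A * c₃ := by rw [← h3, iteratedDeriv_succ' (n := 2)]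
  have g3 : iteratedDeriv 3 (deriv f) α = 24 * A * c₄ := by rw [← h4, iteratedDeriv_succ' (n := 3)]
  obtain ⟨R, hR⟩ : ∃ R : ℝ → ℝ, R = fun x => f x - A * ((x - α) + c₂ * (x - α) ^ 2
    + c₃ * (x - α) ^ 3 + c₄ * (x - α) ^ 4) := ⟨_, rfl⟩
  obtain ⟨S, hS⟩ : ∃ S : ℝ → ℝ, S = fun x => deriv f x - A * (1 + 2 * c₂ * (x - α)
    + 3 * c₃ * (x - α) ^ 2 + 4 * c₄ * (x - α) ^ 3) := ⟨_, rfl⟩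
  have hRO : R =O[𝓝 α] fun x => (x - α) ^ 5 := by
    have h := taylorBigO_aux f α ε hε 4 (contDiffOn_infty.1 hfb _)
    refine h.congr_left fun x => ?_
    simp only [taylorWithinEval_succ, taylor_within_zero_eval, hit, hroot, hR, smul_eq_mul,
      Nat.reduceAdd, h2, h3, h4, zero_add, iteratedDeriv_one, ← hA]
    norm_num [Nat.factorial]
    ring
  have hSO : S =O[𝓝 α] fun x => (x - α) ^ 4 := by
    have h := taylorBigO_aux (deriv f) α ε hε 3 (contDiffOn_infty.1 hfd _)
    refine h.congr_left fun x => ?_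
    simp only [taylorWithinEval_succ, taylor_within_zero_eval, hit, hS, smul_eq_mul,
      Nat.reduceAdd, g1, g2, g3, zero_add, ← hA]
    norm_num [Nat.factorial]
    ring
  have hfx : ∀ x, f x = A * ((x - α) + c₂ * (x - α) ^ 2
    + c₃ * (x - α) ^ 3 + c₄ * (x - α) ^ 4) + R x := fun x => by rw [hR]; ring
  have hdx : ∀ x, deriv f x = A * (1 + 2 * c₂ * (x - α)
    + 3 * c₃ * (x - α) ^ 2 + 4 * c₄ * (x - α) ^ 3) + S x := fun x => by rw [hS]; ring
  have hcont : ContinuousAt (deriv f) α := hfd.continuousOn.continuousAt (hopen.mem_nhds hmem)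
  have hne : ∀ᶠ x in 𝓝 α, deriv f x ≠ 0 := hcont.eventually_ne hsimple
  have hinv : (fun x => (deriv f x)⁻¹) =O[𝓝 α] (fun _ => (1 : ℝ)) :=
    (hcont.inv₀ hsimple).isBigO_one ℝ
  have hb : ∀ p : ℝ → ℝ, Continuous p → p =O[𝓝 α] (fun _ => (1 : ℝ)) :=
    fun p hp => hp.continuousAt.isBigO_one ℝ
  -- comparison of powers
  have hpow : ∀ m n : ℕ, m ≤ n → (fun x : ℝ => (x - α) ^ n) =O[𝓝 α] fun x => (x - α) ^ m := by
    intro m n hmn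
    have := (hb (fun x => (x - α) ^ (n - m)) (by fun_prop)).mul
      (isBigO_refl (fun x : ℝ => (x - α) ^ m) (𝓝 α))
    refine this.congr (fun x => ?_) (fun x => by simp)
    rw [← pow_add, Nat.sub_add_cancel hmn]
  have hmulb : ∀ (p g : ℝ → ℝ) (n : ℕ), Continuous p → g =O[𝓝 α] (fun x => (x - α) ^ n) →
      (fun x => p x * g x) =O[𝓝 α] (fun x => (x - α) ^ n) := by
    intro p g n hp hg
    exact ((hb p hp).mul hg).congr_right fun x => by simp
  obtain ⟨d, hd⟩ : ∃ d : ℝ → ℝ, d = fun x => newtonStep f x - α := ⟨_, rfl⟩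
  have hT : (fun x => d x - c₂ * (x - α) ^ 2) =O[𝓝 α] fun x => (x - α) ^ 3 := by
    have hnum : (fun x => ((x - α) - c₂ * (x - α) ^ 2) * S x + (-1) * R x
        + (A * (2 * c₃ - 2 * c₂ ^ 2 + (3 * c₄ - 3 * c₂ * c₃) * (x - α)
          - 4 * c₂ * c₄ * (x - α) ^ 2)) * (x - α) ^ 3) =O[𝓝 α] fun x => (x - α) ^ 3 :=
      ((hmulb _ _ 3 (by fun_prop) (hSO.trans (hpow 3 4 (by norm_num)))).add
        (hmulb _ _ 3 (by fun_prop) (hRO.trans (hpow 3 5 (by norm_num))))).add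
        (hmulb _ _ 3 (by fun_prop) (isBigO_refl _ _))
    refine (hinv.mul hnum).congr' ?_ (Eventually.of_forall fun x => by simp)
    filter_upwards [hne] with x hx
    rw [inv_mul_eq_iff_eq_mul₀ hx, hd]
    simp only [newtonStep]
    have : deriv f x * (x - f x / deriv f x - α - c₂ * (x - α) ^ 2)
      = deriv f x * ((x - α) - c₂ * (x - α) ^ 2) - f x := by field_simp; ring
    rw [this, hfx x, hdx x]
    ring
  have hd2 : d =O[𝓝 α] fun x => (x - α) ^ 2 :=
    ((hT.trans (hpow 2 3 (by norm_num))).add (isBigO_const_mul_self c₂ _ _)).congr_left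
      fun x => by ring
  have he0 : Tendsto (fun x : ℝ => x - α) (𝓝 α) (𝓝 0) := by
    have : ContinuousAt (fun x : ℝ => x - α) α := by fun_prop
    simpa [ContinuousAt] using this
  have hd0 : Tendsto d (𝓝 α) (𝓝 0) := hd2.trans_tendsto (by simpa using he0.pow 2)
  have hy : Tendsto (newtonStep f) (𝓝 α) (𝓝 α) := by
    have := hd0.add_const α
    simpa [hd] using this
  have hRy : (fun x => R (newtonStep f x)) =O[𝓝 α] fun x => (x - α) ^ 5 := by
    have h1 : (fun x => R (newtonStep f x)) =O[𝓝 α] fun x => (d x) ^ 5 := by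
      have := hRO.comp_tendsto hy
      simpa [hd, Function.comp_def] using this
    have h2' : (fun x => (d x) ^ 5) =O[𝓝 α] fun x => (x - α) ^ 10 :=
      (hd2.pow 5).congr_right fun x => by ring
    exact (h1.trans h2').trans (hpow 5 10 (by norm_num))
  obtain ⟨D, hD⟩ : ∃ D : ℝ → ℝ, D = fun x => newtonStep f x - x := ⟨_, rfl⟩
  have hDd : ∀ x, D x = d x - (x - α) := fun x => by rw [hD, hd]; ring
  have hde : d =o[𝓝 α] fun x => (x - α) := by
    refine hd2.trans_isLittleO ?_
    have : (fun x : ℝ => (x - α)) =o[𝓝 α] (fun _ => (1 : ℝ)) := (isLittleO_one_iff ℝ).2 he0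
    refine (this.mul_isBigO (isBigO_refl (fun x : ℝ => x - α) _)).congr (fun x => ?_) (fun x => ?_)
    · ring
    · simp
  have heD : (fun x => x - α) =O[𝓝 α] D := by
    have : (fun x => x - α) =O[𝓝 α] fun x => d x + -(x - α) := by
      have h := (hde.neg_right.right_isBigO_add (f₂ := fun x => -(x - α)))
      exact (isBigO_neg_left.1 h)
    exact this.congr_right fun x => by rw [hDd]; ring
  have hDO : D =O[𝓝 α] fun x => (x - α) ^ 1 := by
    refine (hde.isBigO.sub (isBigO_refl _ _)).congr (fun x => (hDd x).symm) (fun x => by ring)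
  have hN : (fun x => R (newtonStep f x) - R x - S x * D x) =O[𝓝 α] fun x => (x - α) ^ 5 :=
    (hRy.sub hRO).sub ((hSO.mul hDO).congr_right fun x => by ring)
  have hl : 𝓝[≠] α ≤ 𝓝 α := nhdsWithin_le_nhds
  have hxne : ∀ᶠ x in 𝓝[≠] α, x - α ≠ 0 := by
    filter_upwards [self_mem_nhdsWithin] with x hx
    exact sub_ne_zero.2 hx
  have hDne : ∀ᶠ x in 𝓝[≠] α, D x ≠ 0 := by
    obtain ⟨C, hC⟩ := (heD.mono hl).bound
    filter_upwards [hC, hxne] with x hx hx0 h0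
    rw [h0, norm_zero, mul_zero] at hx
    exact hx0 (norm_le_zero_iff.1 hx)
  have hDinv : (fun x => (D x)⁻¹) =O[𝓝[≠] α] fun x => (x - α)⁻¹ :=
    (heD.mono hl).inv_rev (hxne.mono fun x hx h => absurd h hx)
  have hQ : (fun x => (R (newtonStep f x) - R x - S x * D x) * ((D x)⁻¹) ^ 2) =O[𝓝[≠] α]
      fun x => (x - α) ^ 3 := by
    refine ((hN.mono hl).mul (hDinv.pow 2)).congr' EventuallyEq.rfl ?_
    filter_upwards [hxne] with x hx
    field_simp
  have hed : (fun x => (x - α) * d x) =O[𝓝 α] fun x => (x - α) ^ 3 :=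
    ((isBigO_refl (fun x : ℝ => x - α) _).mul hd2).congr_right fun x => by ring
  have hdd : (fun x => d x * d x) =O[𝓝 α] fun x => (x - α) ^ 3 :=
    ((hd2.mul hd2).congr_right (g₂ := fun x => (x - α) ^ 4) fun x => by ring).trans
      (hpow 3 4 (by norm_num))
  have hP := ((hT.const_mul_left (A * c₃)).add (hed.const_mul_left (2 * A * c₄))).add
    (hdd.const_mul_left (A * c₄))
  refine ((hP.mono hl).add hQ).congr' ?_ EventuallyEq.rfl
  filter_upwards [hDne] with x hx
  have hyx : newtonStep f x - α = d x := by rw [hd]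
  have hyD : newtonStep f x - x = D x := by rw [hD]
  have hde' : d x = D x + (x - α) := by rw [hDd]; ring
  simp only [divDiff2, divDiff]
  rw [hyD, hfx (newtonStep f x), hfx x, hdx x, hyx, hde']
  field_simp
  ring
end
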